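/- Let ξ, η, σ ∈ ℂ with Re(ξ²) > 0, Re(η²) > 0, and |Re σ| < 1/4. Then K₀((ξ² + η²)/4) = (1/(2^{1/2} π i)) ∫_{σ−i∞}^{σ+i∞} Γ(1/4 − s) Γ(1/4 + s) D_{2s−1/2}(ξ) D_{−2s−1/2}(η) ds. (Note that Re((ξ²+η²)/4) > 0, so all functions appearing are in the domains of the stated representations.) -/

import Mathlib

/-- Confluent hypergeometric function of the second kind via its Laplace-transform
representation, valid for `Re a > 0`, `Re z > 0` (principal branch powers). -/
noncomputable def hypU (a b z : ℂ) : ℂ :=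
  (Complex.Gamma a)⁻¹ *
    ∫ t in Set.Ioi (0 : ℝ), Complex.exp (-z * t) * (t : ℂ) ^ (a - 1) * ((1 : ℂ) + t) ^ (b - a - 1)

/-- Parabolic cylinder function `D_ν(z) = 2^{ν/2} e^{-z²/4} U(-ν/2, 1/2, z²/2)`,
valid for `Re ν < 0`, `Re(z²) > 0` (principal branch powers). -/
noncomputable def parD (ν z : ℂ) : ℂ :=
  (2 : ℂ) ^ (ν / 2) * Complex.exp (-z ^ 2 / 4) * hypU (-ν / 2) (1 / 2) (z ^ 2 / 2)

/-- Order-zero modified Bessel function of the second kind,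
`K₀(z) = √π e^{-z} U(1/2, 1, 2z)`, valid for `Re z > 0`. -/
noncomputable def besselK0 (z : ℂ) : ℂ :=
  (Real.sqrt Real.pi : ℂ) * Complex.exp (-z) * hypU (1 / 2) 1 (2 * z)

/-!
Substituting `t = u / (1 - u)` in the Laplace representation exhibits `Γ(a) U(a, b, z)` as the
Mellin transform at `a` of `φ_{b,z}(u) = (1 - u)^{-b} e^{-zu/(1-u)}` on `(0, 1)`, and these kernels
multiply as `φ_{b,z} φ_{c,w} = φ_{b+c,z+w}`. Mellin–Parseval, which is Plancherel's theorem in the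
variable `-log u`, therefore evaluates the integral of `Γ(a) U(a, b, z) Γ(a') U(a', c, w)` as `a`
and `a'` move on vertical lines with `a + a'` constant. The parabolic cylinder functions are the
case `b = c = 1/2`, and `a + a' = 1/2` turns the result `U(1/2, 1, ·)` into `K₀`.
-/

open MeasureTheory Set Filter Complex ComplexConjugate FourierTransform SchwartzMap

section Plancherel

variable {V H : Type*} [NormedAddCommGroup V] [InnerProductSpace ℝ V] [FiniteDimensional ℝ V]
  [MeasurableSpace V] [BorelSpace V] [NormedAddCommGroup H] [InnerProductSpace ℂ H]

theorem continuous_fourier_of_integrable {f : V → H} (hf : Integrable f) : Continuous (𝓕 f) :=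
  VectorFourier.fourierIntegral_continuous Real.continuous_fourierChar
    (innerSL ℝ).continuous₂ hf

variable [CompleteSpace H]

theorem integral_smul_fourier_toLp {f : V → H} (hf : Integrable f) (hf2 : MemLp f 2)
    (φ : 𝓢(V, ℂ)) :
    ∫ x, φ x • (𝓕 (hf2.toLp f) : Lp (α := V) H 2 volume) x = ∫ x, φ x • 𝓕 f x := by
  calc ∫ x, φ x • (𝓕 (hf2.toLp f) : Lp (α := V) H 2 volume) x
      = ∫ x, 𝓕 φ x • hf2.toLp f x := by
        rw [← Lp.toTemperedDistribution_apply, ← Lp.fourier_toTemperedDistribution_eq,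
          TemperedDistribution.fourier_apply, Lp.toTemperedDistribution_apply]
    _ = ∫ x, 𝓕 φ x • f x := integral_congr_ae <| by
        filter_upwards [hf2.coeFn_toLp] with x hx
        rw [hx]
    _ = ∫ x, φ x • 𝓕 f x := by
        simpa only [flip_innerₗ] using! VectorFourier.integral_fourierIntegral_smul_eq_flip
          (L := innerₗ V) Real.continuous_fourierChar (innerSL ℝ).continuous₂
          (φ.integrable (μ := volume)) hf

theorem fourier_toLp_ae_eq {f : V → H} (hf : Integrable f) (hf2 : MemLp f 2) :
    (𝓕 (hf2.toLp f) : Lp (α := V) H 2 volume) =ᵐ[volume] 𝓕 f := by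
  refine ae_eq_of_integral_contDiff_smul_eq ((Lp.memLp _).locallyIntegrable (by norm_num))
    (continuous_fourier_of_integrable hf).locallyIntegrable fun g hg hg_cpt ↦ ?_
  have hcpt : HasCompactSupport (ofRealCLM ∘ g) := hg_cpt.comp_left rfl
  have hsmooth : ContDiff ℝ (⊤ : ℕ∞) (ofRealCLM ∘ g) := by fun_prop
  simpa using integral_smul_fourier_toLp hf hf2 (hcpt.toSchwartzMap hsmooth)

theorem integral_inner_fourier_fourier {f g : V → H} (hf : Integrable f) (hf2 : MemLp f 2)
    (hg : Integrable g) (hg2 : MemLp g 2) :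
    ∫ w, inner ℂ (𝓕 f w) (𝓕 g w) = ∫ x, inner ℂ (f x) (g x) := by
  have h := Lp.inner_fourier_eq (hf2.toLp f) (hg2.toLp g)
  rw [L2.inner_def, L2.inner_def] at h
  have hL : ∫ w, inner ℂ ((𝓕 (hf2.toLp f) : Lp (α := V) H 2 volume) w)
      ((𝓕 (hg2.toLp g) : Lp (α := V) H 2 volume) w) = ∫ w, inner ℂ (𝓕 f w) (𝓕 g w) :=
    integral_congr_ae <| by
      filter_upwards [fourier_toLp_ae_eq hf hf2, fourier_toLp_ae_eq hg hg2] with w hfw hgw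
      rw [hfw, hgw]
  have hR : ∫ x, inner ℂ (hf2.toLp f x) (hg2.toLp g x) = ∫ x, inner ℂ (f x) (g x) :=
    integral_congr_ae <| by
      filter_upwards [hf2.coeFn_toLp, hg2.coeFn_toLp] with x hfx hgx
      rw [hfx, hgx]
  rw [← hL, h, hR]

theorem fourier_conj (f : V → ℂ) (w : V) :
    𝓕 (fun v ↦ conj (f v)) w = conj (𝓕 f (-w)) := by
  rw [Real.fourier_eq', Real.fourier_eq', ← integral_conj]
  simp [← exp_conj, conj_ofNat]

theorem integral_fourier_neg_mul_fourier {f g : V → ℂ} (hf : Integrable f) (hf2 : MemLp f 2)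
    (hg : Integrable g) (hg2 : MemLp g 2) :
    ∫ w, 𝓕 f (-w) * 𝓕 g w = ∫ x, f x * g x := by
  have h := integral_inner_fourier_fourier (f := fun x ↦ conj (f x))
    (conjCLE.integrable_comp_iff.2 hf) hf2.star hg hg2
  simpa only [fourier_conj, RCLike.inner_apply, conj_conj, mul_comm] using h

end Plancherel

section MellinParseval

variable {E : Type*} [NormedAddCommGroup E] [NormedSpace ℂ E]

/-- The pullback of `t ^ s • f t` along `t = e^{-u}`, which carries the Mellin transform on the
line `Re s = const` to the Fourier transform. -/
noncomputable def expTwist (f : ℝ → E) (s : ℂ) (u : ℝ) : E :=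
  cexp (-s * u) • f (Real.exp (-u))

theorem image_exp_neg_univ : (fun u : ℝ ↦ Real.exp (-u)) '' univ = Ioi 0 := by
  rw [image_univ, ← Real.range_exp]
  exact neg_surjective.range_comp Real.exp

theorem hasDerivAt_exp_neg (u : ℝ) :
    HasDerivAt (fun u : ℝ ↦ Real.exp (-u)) (-Real.exp (-u)) u := by
  simpa using (hasDerivAt_neg u).exp

theorem injective_exp_neg : Function.Injective fun u : ℝ ↦ Real.exp (-u) :=
  Real.exp_injective.comp neg_injective

theorem ofReal_exp_cpow (x : ℝ) (s : ℂ) : (Real.exp x : ℂ) ^ s = cexp (s * x) := by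
  rw [cpow_def_of_ne_zero (ofReal_ne_zero.2 (Real.exp_pos x).ne'),
    ← ofReal_log (Real.exp_pos x).le, Real.log_exp, mul_comm]

theorem abs_deriv_exp_neg_smul_cpow_smul (f : ℝ → E) (s : ℂ) (u : ℝ) :
    |-Real.exp (-u)| • ((Real.exp (-u) : ℂ) ^ (s - 1) • f (Real.exp (-u))) = expTwist f s u := by
  rw [abs_neg, Real.abs_exp, ← coe_smul, smul_smul, expTwist, ofReal_exp_cpow, ofReal_exp,
    ← Complex.exp_add]
  congr 2
  push_cast
  ring

theorem integrable_expTwist_iff {f : ℝ → E} {s : ℂ} :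
    Integrable (expTwist f s) ↔ MellinConvergent f s := by
  rw [MellinConvergent, ← image_exp_neg_univ, integrableOn_image_iff_integrableOn_abs_deriv_smul
    MeasurableSet.univ (fun u _ ↦ (hasDerivAt_exp_neg u).hasDerivWithinAt) injective_exp_neg.injOn]
  simp only [abs_deriv_exp_neg_smul_cpow_smul, integrableOn_univ]

theorem integral_expTwist (f : ℝ → E) (s : ℂ) : ∫ u, expTwist f s u = mellin f s := by
  rw [mellin, ← image_exp_neg_univ, integral_image_eq_integral_abs_deriv_smul
    MeasurableSet.univ (fun u _ ↦ (hasDerivAt_exp_neg u).hasDerivWithinAt) injective_exp_neg.injOn]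
  simp only [abs_deriv_exp_neg_smul_cpow_smul, setIntegral_univ]

theorem fourier_expTwist (f : ℝ → E) (s : ℂ) (w : ℝ) :
    𝓕 (expTwist f s) w = mellin f (s + I * ↑(2 * Real.pi * w)) := by
  rw [Real.fourier_real_eq_integral_exp_smul, ← integral_expTwist]
  congr 1 with u
  rw [expTwist, smul_smul, ← Complex.exp_add, expTwist]
  congr 2
  push_cast
  ring

theorem expTwist_mul_expTwist (f g : ℝ → ℂ) (a b : ℂ) (u : ℝ) :
    expTwist f a u * expTwist g b u = expTwist (fun t ↦ f t * g t) (a + b) u := by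
  simp only [expTwist, smul_eq_mul, neg_add, add_mul, Complex.exp_add]
  ring

theorem norm_expTwist (f : ℝ → E) (s : ℂ) (u : ℝ) :
    ‖expTwist f s u‖ = Real.exp (-s.re * u) * ‖f (Real.exp (-u))‖ := by
  simp [expTwist, norm_smul, norm_exp]

theorem memLp_two_expTwist {f : ℝ → E} {s : ℂ} (hf : MellinConvergent f s)
    (hf2 : MellinConvergent (fun t ↦ (‖f t‖ ^ 2 : ℂ)) (2 * s.re)) :
    MemLp (expTwist f s) 2 := by
  rw [memLp_two_iff_integrable_sq_norm (integrable_expTwist_iff.2 hf).aestronglyMeasurable]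
  refine (integrable_expTwist_iff.2 hf2).norm.congr (.of_forall fun u ↦ ?_)
  simp [norm_expTwist, mul_pow, ← Real.exp_nat_mul, mul_assoc]

theorem integral_mellin_mul_mellin {f g : ℝ → ℂ} {a b : ℂ}
    (hf : MellinConvergent f a) (hf2 : MellinConvergent (fun t ↦ (‖f t‖ ^ 2 : ℂ)) (2 * a.re))
    (hg : MellinConvergent g b) (hg2 : MellinConvergent (fun t ↦ (‖g t‖ ^ 2 : ℂ)) (2 * b.re)) :
    ∫ τ : ℝ, mellin f (a - I * τ) * mellin g (b + I * τ) =
      2 * Real.pi * mellin (fun t ↦ f t * g t) (a + b) := by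
  have hP := integral_fourier_neg_mul_fourier (integrable_expTwist_iff.2 hf)
    (memLp_two_expTwist hf hf2) (integrable_expTwist_iff.2 hg) (memLp_two_expTwist hg hg2)
  simp only [expTwist_mul_expTwist, integral_expTwist, fourier_expTwist, mul_neg, ofReal_neg,
    ← sub_eq_add_neg] at hP
  rw [Measure.integral_comp_mul_left
    (fun τ : ℝ ↦ mellin f (a - I * τ) * mellin g (b + I * τ)) (2 * Real.pi)] at hP
  rw [← hP, abs_of_pos (by positivity), real_smul]
  push_cast
  field_simp

theorem mellinConvergent_of_norm_le {f : ℝ → E} {s : ℂ} {C : ℝ}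
    (hf : AEStronglyMeasurable f) (hC : ∀ t, ‖f t‖ ≤ C) (h0 : f =ᶠ[atTop] 0) (hs : 0 < s.re) :
    MellinConvergent f s := by
  have hloc : LocallyIntegrable f :=
    (memLp_top_of_bound hf C (.of_forall hC)).locallyIntegrable le_top
  refine mellinConvergent_of_isBigO_rpow (a := s.re + 1) (b := 0) (hloc.locallyIntegrableOn _)
    (h0.trans_isBigO (Asymptotics.isBigO_zero _ _)) (lt_add_one _) ?_ hs
  simpa using Asymptotics.isBigO_of_le' (c := C) (g := fun _ ↦ (1 : ℝ)) _ (by simpa using hC)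

end MellinParseval

section Substitution

theorem hasDerivAt_div_one_sub {u : ℝ} (hu : u ≠ 1) :
    HasDerivAt (fun u : ℝ ↦ u / (1 - u)) (((1 - u) ^ 2)⁻¹) u := by
  have h : 1 - u ≠ 0 := sub_ne_zero.2 hu.symm
  refine ((hasDerivAt_id u).fun_div ((hasDerivAt_id u).const_sub 1) h).congr_deriv ?_
  simp

theorem injOn_div_one_sub : InjOn (fun u : ℝ ↦ u / (1 - u)) (Ioo 0 1) := by
  intro u hu v hv h
  have hu' : 1 - u ≠ 0 := (sub_pos.2 hu.2).ne'
  have hv' : 1 - v ≠ 0 := (sub_pos.2 hv.2).ne'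
  simp only [div_eq_div_iff hu' hv'] at h
  linarith

theorem image_div_one_sub_Ioo : (fun u : ℝ ↦ u / (1 - u)) '' Ioo 0 1 = Ioi 0 := by
  refine Subset.antisymm ?_ fun t ht ↦ ⟨t / (1 + t), ?_, ?_⟩
  · rintro _ ⟨u, hu, rfl⟩
    exact div_pos hu.1 (sub_pos.2 hu.2)
  · have ht : 0 < t := ht
    exact ⟨by positivity, (div_lt_one (by positivity)).2 (by linarith)⟩
  · have ht : 0 < t := ht
    field_simp
    ring

theorem integral_Ioi_eq_integral_Ioo_div_one_sub {E : Type*} [NormedAddCommGroup E]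
    [NormedSpace ℝ E] (g : ℝ → E) :
    ∫ t in Ioi 0, g t = ∫ u in Ioo (0 : ℝ) 1, ((1 - u) ^ 2)⁻¹ • g (u / (1 - u)) := by
  rw [← image_div_one_sub_Ioo, integral_image_eq_integral_abs_deriv_smul measurableSet_Ioo
    (fun u hu ↦ (hasDerivAt_div_one_sub hu.2.ne).hasDerivWithinAt) injOn_div_one_sub]
  simp only [abs_inv, abs_pow, sq_abs]

end Substitution

/-- The function on `(0, 1)` whose Mellin transform is `a ↦ Γ(a) U(a, b, z)`, obtained from the
Laplace representation of `U` by substituting `t = u / (1 - u)`. -/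
noncomputable def hypUKernel (b z : ℂ) : ℝ → ℂ :=
  (Ioo 0 1).indicator fun u ↦ ((1 - u : ℝ) : ℂ) ^ (-b) * cexp (-z * (u / (1 - u) : ℝ))

section HypU

variable {a b z w : ℂ}

theorem mellin_indicator_Ioo (f : ℝ → ℂ) (a : ℂ) :
    mellin ((Ioo 0 1).indicator f) a = ∫ u in Ioo (0 : ℝ) 1, (u : ℂ) ^ (a - 1) * f u := by
  simp_rw [mellin, smul_eq_mul, ← indicator_mul_right _ (fun t : ℝ ↦ (t : ℂ) ^ (a - 1))]
  rw [setIntegral_indicator measurableSet_Ioo, inter_eq_self_of_subset_right Ioo_subset_Ioi_self]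

theorem ofReal_inv_cpow {x : ℝ} (hx : 0 < x) (s : ℂ) : ((x⁻¹ : ℝ) : ℂ) ^ s = (x : ℂ) ^ (-s) := by
  rw [ofReal_inv, inv_cpow _ _ (by simpa [arg_ofReal_of_nonneg hx.le] using Real.pi_ne_zero.symm),
    cpow_neg]

theorem div_one_sub_cpow_mul_one_add_cpow {u : ℝ} (hu : u ∈ Ioo (0 : ℝ) 1) (a b : ℂ) :
    ((1 - u) ^ 2)⁻¹ • (((u / (1 - u) : ℝ) : ℂ) ^ (a - 1) *
        (1 + (u / (1 - u) : ℝ)) ^ (b - a - 1)) =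
      (u : ℂ) ^ (a - 1) * ((1 - u : ℝ) : ℂ) ^ (-b) := by
  have h1u : 0 < 1 - u := sub_pos.2 hu.2
  have hone_add : 1 + ((u / (1 - u) : ℝ) : ℂ) = ((1 - u)⁻¹ : ℝ) := by
    rw [← ofReal_one, ← ofReal_add]
    congr 1
    field_simp
    ring
  have hsq : ((((1 - u) ^ 2)⁻¹ : ℝ) : ℂ) = ((1 - u : ℝ) : ℂ) ^ (-2 : ℂ) := by
    rw [cpow_neg, cpow_ofNat, ofReal_inv, ofReal_pow]
  have hexp : -b = -2 + (-(a - 1) + -(b - a - 1)) := by ring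
  have h1u' : ((1 - u : ℝ) : ℂ) ≠ 0 := ofReal_ne_zero.2 h1u.ne'
  rw [hone_add, real_smul, hsq, div_eq_mul_inv, ofReal_mul,
    mul_cpow_ofReal_nonneg hu.1.le (by positivity), ofReal_inv_cpow h1u, ofReal_inv_cpow h1u, hexp,
    cpow_add _ _ h1u', cpow_add _ _ h1u']
  ring

theorem mellin_hypUKernel (b z : ℂ) (ha : 0 < a.re) :
    mellin (hypUKernel b z) a = Gamma a * hypU a b z := by
  rw [hypU, mul_inv_cancel_left₀ (Gamma_ne_zero_of_re_pos ha), hypUKernel, mellin_indicator_Ioo,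
    integral_Ioi_eq_integral_Ioo_div_one_sub]
  refine setIntegral_congr_fun measurableSet_Ioo fun u hu ↦ ?_
  rw [mul_assoc, ← mul_smul_comm, div_one_sub_cpow_mul_one_add_cpow hu a b]
  ring

theorem hypUKernel_mul_hypUKernel (b c z w : ℂ) :
    (fun u ↦ hypUKernel b z u * hypUKernel c w u) = hypUKernel (b + c) (z + w) := by
  ext u
  by_cases hu : u ∈ Ioo (0 : ℝ) 1
  · have h : ((1 - u : ℝ) : ℂ) ≠ 0 := ofReal_ne_zero.2 (sub_pos.2 hu.2).ne'
    simp only [hypUKernel, indicator_of_mem hu, neg_add, add_mul, cpow_add _ _ h, Complex.exp_add]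
    ring
  · simp [hypUKernel, hu]

theorem measurable_hypUKernel (b z : ℂ) : Measurable (hypUKernel b z) :=
  Measurable.indicator (by fun_prop) measurableSet_Ioo

theorem exists_rpow_le_mul_exp (β : ℝ) {r : ℝ} (hr : 0 < r) :
    ∃ C, 0 ≤ C ∧ ∀ x, 1 ≤ x → x ^ β ≤ C * Real.exp (r * x) := by
  obtain ⟨n, hn⟩ := exists_nat_ge β
  refine ⟨n.factorial / r ^ n, by positivity, fun x hx ↦ ?_⟩
  calc x ^ β ≤ x ^ n := by
        rw [← Real.rpow_natCast]
        exact Real.rpow_le_rpow_of_exponent_le hx hn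
    _ = n.factorial / r ^ n * ((r * x) ^ n / n.factorial) := by
        rw [mul_pow]
        field_simp
    _ ≤ n.factorial / r ^ n * Real.exp (r * x) := by
        gcongr
        exact Real.pow_div_factorial_le_exp _ (by positivity) n

theorem exists_norm_hypUKernel_le (b : ℂ) (hz : 0 < z.re) : ∃ C, ∀ u, ‖hypUKernel b z u‖ ≤ C := by
  obtain ⟨C, hC0, hC⟩ := exists_rpow_le_mul_exp b.re hz
  refine ⟨C * Real.exp z.re, fun u ↦ ?_⟩
  by_cases hu : u ∈ Ioo (0 : ℝ) 1
  · have h1u : 0 < 1 - u := sub_pos.2 hu.2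
    calc ‖hypUKernel b z u‖
        = (1 - u)⁻¹ ^ b.re * Real.exp (-z.re * (u / (1 - u))) := by
          rw [hypUKernel, indicator_of_mem hu, norm_mul, norm_cpow_eq_rpow_re_of_pos h1u, norm_exp,
            neg_re, Real.rpow_neg h1u.le, Real.inv_rpow h1u.le, re_mul_ofReal, neg_re]
      _ ≤ C * Real.exp (z.re * (1 - u)⁻¹) * Real.exp (-z.re * (u / (1 - u))) := by
          gcongr
          exact hC _ ((one_le_inv₀ h1u).2 (by linarith [hu.1]))
      _ = C * Real.exp z.re := by
          rw [mul_assoc, ← Real.exp_add]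
          congr 2
          field_simp
          ring
  · simpa [hypUKernel, hu] using by positivity

theorem hypUKernel_eventuallyEq_zero (b z : ℂ) : hypUKernel b z =ᶠ[atTop] 0 := by
  filter_upwards [eventually_ge_atTop 1] with u hu
  exact indicator_of_notMem (fun h ↦ h.2.not_ge hu) _

theorem mellinConvergent_hypUKernel (b : ℂ) (hz : 0 < z.re) (ha : 0 < a.re) :
    MellinConvergent (hypUKernel b z) a := by
  obtain ⟨C, hC⟩ := exists_norm_hypUKernel_le b hz
  exact mellinConvergent_of_norm_le (measurable_hypUKernel b z).aestronglyMeasurable hC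
    (hypUKernel_eventuallyEq_zero b z) ha

theorem mellinConvergent_norm_hypUKernel_sq (b : ℂ) (hz : 0 < z.re) (ha : 0 < a.re) :
    MellinConvergent (fun u ↦ (‖hypUKernel b z u‖ ^ 2 : ℂ)) a := by
  obtain ⟨C, hC⟩ := exists_norm_hypUKernel_le b hz
  refine mellinConvergent_of_norm_le (C := C ^ 2) ?_ (fun u ↦ ?_) ?_ ha
  · have := measurable_hypUKernel b z
    exact Measurable.aestronglyMeasurable (by fun_prop)
  · simpa using pow_le_pow_left₀ (norm_nonneg _) (hC u) 2
  · filter_upwards [hypUKernel_eventuallyEq_zero b z] with u hu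
    simp [hu]

theorem integral_Gamma_mul_hypU_mul_Gamma_mul_hypU (c d : ℂ) (hz : 0 < z.re) (hw : 0 < w.re)
    (ha : 0 < a.re) (hb : 0 < b.re) :
    ∫ τ : ℝ, Gamma (a - I * τ) * hypU (a - I * τ) c z *
        (Gamma (b + I * τ) * hypU (b + I * τ) d w) =
      2 * Real.pi * (Gamma (a + b) * hypU (a + b) (c + d) (z + w)) := by
  have ha' (τ : ℝ) : 0 < (a - I * τ).re := by simpa
  have hb' (τ : ℝ) : 0 < (b + I * τ).re := by simpa
  have hab : 0 < (a + b).re := add_pos ha hb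
  simp only [← mellin_hypUKernel, ha', hb', hab]
  rw [← hypUKernel_mul_hypUKernel]
  refine integral_mellin_mul_mellin (mellinConvergent_hypUKernel c hz ha)
    (mellinConvergent_norm_hypUKernel_sq c hz ?_) (mellinConvergent_hypUKernel d hw hb)
    (mellinConvergent_norm_hypUKernel_sq d hw ?_) <;> simpa

end HypU

theorem parD_neg_two_mul_mul_parD_neg_two_mul (s t ξ η : ℂ) :
    parD (-2 * s) ξ * parD (-2 * t) η =
      2 ^ (-(s + t)) * cexp (-(ξ ^ 2 + η ^ 2) / 4) *
        (hypU s (1 / 2) (ξ ^ 2 / 2) * hypU t (1 / 2) (η ^ 2 / 2)) := by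
  have hexp : cexp (-(ξ ^ 2 + η ^ 2) / 4) = cexp (-ξ ^ 2 / 4) * cexp (-η ^ 2 / 4) := by
    rw [← Complex.exp_add]
    ring_nf
  have hpow : (2 : ℂ) ^ (-(s + t)) = 2 ^ (-2 * s / 2) * 2 ^ (-2 * t / 2) := by
    rw [← cpow_add _ _ two_ne_zero]
    ring_nf
  have horder (s : ℂ) : -(-2 * s) / 2 = s := by ring
  rw [parD, parD, horder, horder, hexp, hpow]
  ring

theorem integral_Gamma_mul_Gamma_mul_parD_mul_parD {a b ξ η : ℂ} (hξ : 0 < (ξ ^ 2).re)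
    (hη : 0 < (η ^ 2).re) (ha : 0 < a.re) (hb : 0 < b.re) :
    ∫ τ : ℝ, Gamma (a - I * τ) * Gamma (b + I * τ) *
        parD (-2 * (a - I * τ)) ξ * parD (-2 * (b + I * τ)) η =
      2 ^ (-(a + b)) * cexp (-(ξ ^ 2 + η ^ 2) / 4) *
        (2 * Real.pi * (Gamma (a + b) * hypU (a + b) 1 ((ξ ^ 2 + η ^ 2) / 2))) := by
  have h := integral_Gamma_mul_hypU_mul_Gamma_mul_hypU (1 / 2) (1 / 2)
    (z := ξ ^ 2 / 2) (w := η ^ 2 / 2) (by simpa using hξ) (by simpa using hη) ha hb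
  rw [add_halves, ← add_div] at h
  rw [← h, ← integral_const_mul]
  congr 1 with τ
  rw [mul_assoc, parD_neg_two_mul_mul_parD_neg_two_mul]
  ring_nf

theorem besselK0_eq_Gamma_mul_hypU (z : ℂ) :
    besselK0 z = cexp (-z) * (Gamma (1 / 2) * hypU (1 / 2) 1 (2 * z)) := by
  have hGamma : Gamma (1 / 2) = (Real.sqrt Real.pi : ℂ) := by
    rw [Gamma_one_half_eq, Real.sqrt_eq_rpow, ofReal_cpow Real.pi_pos.le]
    norm_num
  rw [besselK0, hGamma]
  ring

/-- Addition theorem for the order-zero modified Bessel function of the second kind. -/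
theorem besselK0_addition (ξ η σ : ℂ) (hξ : 0 < (ξ ^ 2).re) (hη : 0 < (η ^ 2).re)
    (hσ : |σ.re| < 1 / 4) :
    besselK0 ((ξ ^ 2 + η ^ 2) / 4) =
      (1 / ((2 : ℂ) ^ ((1 : ℂ) / 2) * (Real.pi : ℂ) * Complex.I)) *
        (Complex.I * ∫ τ : ℝ,
          Complex.Gamma (1 / 4 - (σ + Complex.I * τ)) *
          Complex.Gamma (1 / 4 + (σ + Complex.I * τ)) *
          parD (2 * (σ + Complex.I * τ) - 1 / 2) ξ *
          parD (-2 * (σ + Complex.I * τ) - 1 / 2) η) := by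
  obtain ⟨hσ₁, hσ₂⟩ := abs_lt.1 hσ
  have hD := integral_Gamma_mul_Gamma_mul_parD_mul_parD (a := 1 / 4 - σ) (b := 1 / 4 + σ) hξ hη
    (by simpa using hσ₂) (by simpa using by linarith)
  have hsub (τ : ℝ) : (1 / 4 - σ - I * τ : ℂ) = 1 / 4 - (σ + I * τ) := by ring
  have hadd (τ : ℝ) : (1 / 4 + σ + I * τ : ℂ) = 1 / 4 + (σ + I * τ) := by ring
  have hξ_order (s : ℂ) : -2 * (1 / 4 - s) = 2 * s - 1 / 2 := by ring
  have hη_order (s : ℂ) : -2 * (1 / 4 + s) = -2 * s - 1 / 2 := by ring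
  have hsum : (1 / 4 - σ + (1 / 4 + σ) : ℂ) = 1 / 2 := by ring
  simp only [hsub, hadd, hξ_order, hη_order, hsum] at hD
  have hz : (2 : ℂ) * ((ξ ^ 2 + η ^ 2) / 4) = (ξ ^ 2 + η ^ 2) / 2 := by ring
  have hsqrt : ((2 : ℂ) ^ (1 / 2 : ℂ)) ^ 2 = 2 := by
    rw [one_div, cpow_ofNat_inv_pow]
  have hsqrt_ne : (2 : ℂ) ^ (1 / 2 : ℂ) ≠ 0 := by simp [cpow_eq_zero_iff]
  rw [hD, besselK0_eq_Gamma_mul_hypU, hz, cpow_neg, ← neg_div]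
  field_simp
  rw [hsqrt]
  ring
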